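/- arXiv:2206.04412 — 2 statements merged into one kernel-verified Lean document; each statement's English description precedes it below -/
import Mathlib

section
/- Let {x^k} be generated by the multiobjective MFISTA algorithm. Then for all i = 1,…,m and all k ≥ 0: F_i(x^k) ≤ F_i(x^0). -/
open scoped RealInnerProductSpace

noncomputable abbrev E (n : ℕ) := EuclideanSpace ℝ (Fin n)

theorem aux_deriv {n : ℕ} {f : E n → ℝ} (hfd : ContDiff ℝ 1 f) (a v : E n) (s : ℝ) :
    HasDerivAt (fun s : ℝ => f (a + s • v)) ⟪gradient f (a + s • v), v⟫ s := by
  have h1 : HasGradientAt f (gradient f (a + s • v)) (a + s • v) :=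
    (hfd.differentiable (by norm_num) _).hasGradientAt
  have h2 : HasDerivAt (fun s : ℝ => a + s • v) v s := by
    simpa using ((hasDerivAt_id s).smul_const v).const_add a
  have h3 := h1.hasFDerivAt.comp_hasDerivAt s h2
  simpa [Function.comp_def] using h3

theorem aux_descent {n : ℕ} {f : E n → ℝ} (hfd : ContDiff ℝ 1 f) (L : ℝ)
    (hflip : ∀ a b, ‖gradient f a - gradient f b‖ ≤ L * ‖a - b‖) (a b : E n) :
    f b ≤ f a + ⟪gradient f a, b - a⟫ + L / 2 * ‖b - a‖ ^ 2 := by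
  set v := b - a with hv
  let φ : ℝ → ℝ := fun s => f (a + s • v) - s * ⟪gradient f a, v⟫ - L / 2 * ‖v‖ ^ 2 * s ^ 2
  have hφ : ∀ s, HasDerivAt φ (⟪gradient f (a + s • v), v⟫ - ⟪gradient f a, v⟫
      - L / 2 * ‖v‖ ^ 2 * (2 * s)) s := by
    intro s
    have h1 := (aux_deriv hfd a v s)
    have h2 := (hasDerivAt_id s).mul_const ⟪gradient f a, v⟫
    have h3 := ((hasDerivAt_pow 2 s).const_mul (L / 2 * ‖v‖ ^ 2))
    refine ((h1.sub h2).sub h3).congr_deriv ?_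
    simp
  have hanti : AntitoneOn φ (Set.Icc 0 1) := by
    apply antitoneOn_of_deriv_nonpos (convex_Icc 0 1)
    · exact fun s _ => (hφ s).continuousAt.continuousWithinAt
    · exact fun s _ => (hφ s).differentiableAt.differentiableWithinAt
    · intro s hs
      rw [interior_Icc] at hs
      rw [(hφ s).deriv, ← inner_sub_left]
      have h1 := real_inner_le_norm (gradient f (a + s • v) - gradient f a) v
      have h2 := hflip (a + s • v) a
      rw [add_sub_cancel_left, norm_smul, Real.norm_of_nonneg hs.1.le] at h2
      have h3 := mul_le_mul_of_nonneg_right h2 (norm_nonneg v)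
      nlinarith
  have := hanti (Set.left_mem_Icc.2 zero_le_one) (Set.right_mem_Icc.2 zero_le_one) zero_le_one
  simp only [φ, one_smul, zero_smul, add_zero] at this
  have hb : a + v = b := by rw [hv]; abel
  rw [hb] at this
  linarith

theorem aux_grad {n : ℕ} {f : E n → ℝ} (hfd : ContDiff ℝ 1 f)
    (hfc : ConvexOn ℝ Set.univ f) (a b : E n) :
    f a + ⟪gradient f a, b - a⟫ ≤ f b := by
  have hd := aux_deriv hfd a (b - a) 0
  simp only [zero_smul, add_zero] at hd
  have hc : ConvexOn ℝ Set.univ (fun s : ℝ => f (a + s • (b - a))) := by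
    have := hfc.comp_affineMap (AffineMap.lineMap (k := ℝ) a b)
    simpa [Function.comp_def, AffineMap.lineMap_apply, add_comm] using this
  have h := hc.le_slope_of_hasDerivAt (Set.mem_univ 0) (Set.mem_univ 1) zero_lt_one hd
  rw [slope_def_field] at h
  simp only [one_smul, zero_smul, add_zero, sub_zero, div_one, add_sub_cancel] at h
  linarith

theorem aux_strong {n : ℕ} (h : E n → ℝ) (hc : ConvexOn ℝ Set.univ h) (ℓ : ℝ) (y z x : E n)
    (hmin : ∀ w, h z + ℓ / 2 * ‖z - y‖ ^ 2 ≤ h w + ℓ / 2 * ‖w - y‖ ^ 2) :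
    h z + ℓ / 2 * ‖z - y‖ ^ 2 + ℓ / 2 * ‖x - z‖ ^ 2 ≤ h x + ℓ / 2 * ‖x - y‖ ^ 2 := by
  have key : ∀ s : ℝ, 0 < s → s ≤ 1 →
      h z + ℓ / 2 * ‖z - y‖ ^ 2 + ℓ / 2 * (1 - s) * ‖x - z‖ ^ 2 ≤ h x + ℓ / 2 * ‖x - y‖ ^ 2 := by
    intro s hs hs1
    have h1 := hmin ((1 - s) • z + s • x)
    have h2 := hc.2 (Set.mem_univ z) (Set.mem_univ x) (sub_nonneg.2 hs1) hs.le (by ring)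
    simp only [smul_eq_mul] at h2
    have h3 : ‖(1 - s) • z + s • x - y‖ ^ 2 =
        (1 - s) * ‖z - y‖ ^ 2 + s * ‖x - y‖ ^ 2 - s * (1 - s) * ‖x - z‖ ^ 2 := by
      have e1 : (1 - s) • z + s • x - y = (1 - s) • (z - y) + s • (x - y) := by module
      have e2 : x - z = (x - y) - (z - y) := by abel
      rw [e1, e2, norm_add_sq_real, norm_sub_sq_real (x - y) (z - y), norm_smul, norm_smul, mul_pow, mul_pow,
        Real.norm_eq_abs, Real.norm_eq_abs, sq_abs, sq_abs, inner_smul_left, inner_smul_right,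
        real_inner_comm]
      simp only [conj_trivial]
      ring
    rw [h3] at h1
    have : s * (h z + ℓ / 2 * ‖z - y‖ ^ 2 + ℓ / 2 * (1 - s) * ‖x - z‖ ^ 2) ≤
        s * (h x + ℓ / 2 * ‖x - y‖ ^ 2) := by nlinarith
    exact le_of_mul_le_mul_left this hs
  have ht : Filter.Tendsto (fun s : ℝ => h z + ℓ / 2 * ‖z - y‖ ^ 2 + ℓ / 2 * (1 - s) * ‖x - z‖ ^ 2)
      (nhdsWithin 0 (Set.Ioi 0))
      (nhds (h z + ℓ / 2 * ‖z - y‖ ^ 2 + ℓ / 2 * (1 - 0) * ‖x - z‖ ^ 2)) := by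
    apply Filter.Tendsto.mono_left _ nhdsWithin_le_nhds
    apply Continuous.tendsto (by fun_prop)
  have := le_of_tendsto ht (by
    filter_upwards [Ioc_mem_nhdsGT (zero_lt_one (α := ℝ))] with s hs
    exact key s hs.1 hs.2)
  simpa using this

theorem stmt_13
    (n m : ℕ) (hn : 1 ≤ n) (hm : 1 ≤ m)
    (f g F : Fin m → E n → ℝ)
    (L : Fin m → ℝ) (hL : ∀ i, 0 < L i)
    (hfc : ∀ i, ConvexOn ℝ Set.univ (f i))
    (hfd : ∀ i, ContDiff ℝ 1 (f i))
    (hflip : ∀ i a b, ‖gradient (f i) a - gradient (f i) b‖ ≤ L i * ‖a - b‖)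
    (hgc : ∀ i, ConvexOn ℝ Set.univ (g i))
    (hF : ∀ i w, F i w = f i w + g i w)
    (ℓ : ℝ) (hℓ : 0 < ℓ) (hℓL : ∀ i, L i ≤ ℓ)
    (d : E n → E n → E n)
    (hd : ∀ a b w,
      (⨆ i, (⟪gradient (f i) b, d a b - b⟫ + g i (d a b) + f i b - F i a)) +
          ℓ / 2 * ‖d a b - b‖ ^ 2 ≤
        (⨆ i, (⟪gradient (f i) b, w - b⟫ + g i w + f i b - F i a)) +
          ℓ / 2 * ‖w - b‖ ^ 2)
    (x y z : ℕ → E n) (t : ℕ → ℝ)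
    (hy1 : y 1 = x 0) (ht1 : t 1 = 1)
    (ht : ∀ k, 1 ≤ k → t (k + 1) = (1 + Real.sqrt (1 + 4 * t k ^ 2)) / 2)
    (hz : ∀ k, 1 ≤ k → z k = d (x (k - 1)) (y k))
    (hxpos : ∀ k, 1 ≤ k → 0 ≤ (⨆ i, (F i (x (k - 1)) - F i (z k))) → x k = z k)
    (hxneg : ∀ k, 1 ≤ k → ¬ 0 ≤ (⨆ i, (F i (x (k - 1)) - F i (z k))) → x k = x (k - 1))
    (hy : ∀ k, 1 ≤ k →
      y (k + 1) = x k + (t k / t (k + 1)) • (z k - x k) +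
        ((t k - 1) / t (k + 1)) • (x k - x (k - 1))) :
    ∀ (i : Fin m) (k : ℕ), F i (x k) ≤ F i (x 0) := by
  have : Nonempty (Fin m) := ⟨⟨0, hm⟩⟩
  have bdd : ∀ u : Fin m → ℝ, BddAbove (Set.range u) := fun u => (Set.finite_range u).bddAbove
  have step : ∀ (i : Fin m) (a b : E n),
      F i (d a b) + ℓ / 2 * ‖d a b - a‖ ^ 2 ≤ F i a + ℓ / 2 * ‖b - a‖ ^ 2 := by
    intro i a b
    have hconv : ConvexOn ℝ Set.univ
        (fun w => ⨆ i, (⟪gradient (f i) b, w - b⟫ + g i w + f i b - F i a)) := by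
      refine ⟨convex_univ, ?_⟩
      intro p _ q _ α β hα hβ hαβ
      apply ciSup_le
      intro j
      have h1 := le_ciSup (bdd (fun i => ⟪gradient (f i) b, p - b⟫ + g i p + f i b - F i a)) j
      have h2 := le_ciSup (bdd (fun i => ⟪gradient (f i) b, q - b⟫ + g i q + f i b - F i a)) j
      have h3 := (hgc j).2 (Set.mem_univ p) (Set.mem_univ q) hα hβ hαβ
      have h4 : α • p + β • q - b = α • (p - b) + β • (q - b) := by
        have : b = (α + β) • b := by rw [hαβ, one_smul]
        nth_rewrite 1 [this]
        module
      rw [h4, inner_add_right, inner_smul_right, inner_smul_right]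
      simp only [smul_eq_mul] at h3 ⊢
      have h5 := mul_le_mul_of_nonneg_left h1 hα
      have h6 := mul_le_mul_of_nonneg_left h2 hβ
      have h7 : f j b - F j a = α * (f j b - F j a) + β * (f j b - F j a) := by
        rw [← add_mul, hαβ, one_mul]
      nlinarith
    have hs := aux_strong _ hconv ℓ b (d a b) a (hd a b)
    have hup : (⨆ i, (⟪gradient (f i) b, a - b⟫ + g i a + f i b - F i a)) ≤ 0 := by
      apply ciSup_le
      intro j
      have := aux_grad (hfd j) (hfc j) b a
      rw [hF]
      linarith
    have hlo := le_ciSup (bdd (fun i => ⟪gradient (f i) b, d a b - b⟫ + g i (d a b) + f i b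
      - F i a)) i
    have hdes := aux_descent (hfd i) (L i) (hflip i) b (d a b)
    have hLl : L i / 2 * ‖d a b - b‖ ^ 2 ≤ ℓ / 2 * ‖d a b - b‖ ^ 2 := by
      have := hℓL i
      gcongr
    have hFd := hF i (d a b)
    rw [norm_sub_rev (d a b) a, norm_sub_rev b a]
    linarith
  have htt : ∀ s : ℝ, 0 ≤ s → s + 1 / 2 ≤ (1 + Real.sqrt (1 + 4 * s ^ 2)) / 2 := by
    intro s hs
    have : 2 * s ≤ Real.sqrt (1 + 4 * s ^ 2) := Real.le_sqrt_of_sq_le (by nlinarith)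
    linarith
  have ht1' : ∀ k, 1 ≤ t (k + 1) := by
    intro k
    induction k with
    | zero => simp [ht1]
    | succ k ih =>
      have := htt (t (k + 1)) (by linarith)
      rw [ht (k + 1) (by omega)]
      linarith
  have main : ∀ (k : ℕ) (i : Fin m),
      F i (x k) + ℓ / 2 * ‖y (k + 1) - x k‖ ^ 2 ≤ F i (x 0) := by
    intro k
    induction k with
    | zero => intro i; simp [hy1]
    | succ k ih =>
      intro i
      have hst := step i (x k) (y (k + 1))
      have hzk := hz (k + 1) (by omega)
      have hyk := hy (k + 1) (by omega)
      have hp := hxpos (k + 1) (by omega)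
      have hq := hxneg (k + 1) (by omega)
      simp only [Nat.add_sub_cancel] at hzk hyk hp hq
      rw [← hzk] at hst
      have a1 := ht1' k
      have a2 : t (k + 1) ≤ t (k + 1 + 1) := by
        have := htt (t (k + 1)) (by linarith)
        rw [ht (k + 1) (by omega)]
        linarith
      have hle : ∀ c : ℝ, 0 ≤ c → c ≤ 1 → ‖c • (z (k + 1) - x k)‖ ≤ ‖z (k + 1) - x k‖ := by
        intro c h0 h1
        rw [norm_smul, Real.norm_of_nonneg h0]
        exact mul_le_of_le_one_left (norm_nonneg _) h1
      have hboth : F i (x (k + 1)) ≤ F i (z (k + 1)) ∧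
          ‖y (k + 1 + 1) - x (k + 1)‖ ≤ ‖z (k + 1) - x k‖ := by
        by_cases hc : 0 ≤ ⨆ i, (F i (x k) - F i (z (k + 1)))
        · have hx := hp hc
          refine ⟨by rw [hx], ?_⟩
          have e : y (k + 1 + 1) - x (k + 1) =
              ((t (k + 1) - 1) / t (k + 1 + 1)) • (z (k + 1) - x k) := by
            rw [hyk, hx, sub_self, smul_zero, add_zero, add_sub_cancel_left]
          rw [e]
          exact hle _ (div_nonneg (by linarith) (by linarith))
            ((div_le_one (by linarith)).2 (by linarith))
        · have hx := hq hc
          have hl := le_ciSup (bdd (fun i => F i (x k) - F i (z (k + 1)))) i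
          refine ⟨by rw [hx]; linarith [not_le.1 hc], ?_⟩
          have e : y (k + 1 + 1) - x (k + 1) =
              (t (k + 1) / t (k + 1 + 1)) • (z (k + 1) - x k) := by
            rw [hyk, hx, sub_self, smul_zero, add_zero, add_sub_cancel_left]
          rw [e]
          exact hle _ (div_nonneg (by linarith) (by linarith))
            ((div_le_one (by linarith)).2 (by linarith))
      obtain ⟨b1, b2⟩ := hboth
      have b3 : ℓ / 2 * ‖y (k + 1 + 1) - x (k + 1)‖ ^ 2 ≤ ℓ / 2 * ‖z (k + 1) - x k‖ ^ 2 := by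
        gcongr
      have := ih i
      linarith
  intro i k
  have h1 := main k i
  have h2 : 0 ≤ ℓ / 2 * ‖y (k + 1) - x k‖ ^ 2 := by positivity
  linarith
end

section
/- Let {x^k} be generated by the multiobjective MFISTA algorithm. Then for every z ∈ ℝ^n and every k ≥ 1: min_{i=1,…,m} ( F_i(x^k) − F_i(z) ) ≤ 2ℓ‖x^0 − z‖² / (k + 1)². -/
open scoped RealInnerProductSpace

lemma line_deriv {n : ℕ} {f : E n → ℝ} (hfd : ContDiff ℝ 1 f) (b v : E n) (s : ℝ) :
    HasDerivAt (fun s : ℝ => f (b + s • v)) ⟪gradient f (b + s • v), v⟫ s := by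
  have h1 : HasFDerivAt f (InnerProductSpace.toDual ℝ (E n) (gradient f (b + s • v))) (b + s • v) :=
    ((hfd.differentiable (by norm_num)) (b + s • v)).hasGradientAt.hasFDerivAt
  have h2 : HasDerivAt (fun s : ℝ => b + s • v) v s := by
    simpa using ((hasDerivAt_id s).smul_const v).const_add b
  exact h1.comp_hasDerivAt s h2

lemma grad_ineq {n : ℕ} {f : E n → ℝ} (hfd : ContDiff ℝ 1 f) (hfc : ConvexOn ℝ Set.univ f)
    (b w : E n) : f b + ⟪gradient f b, w - b⟫ ≤ f w := by
  have hd := line_deriv hfd b (w - b) 0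
  have hc : ConvexOn ℝ Set.univ (fun s : ℝ => f (b + s • (w - b))) := by
    have := hfc.comp_affineMap (AffineMap.lineMap b w : ℝ →ᵃ[ℝ] E n)
    have e : (fun s : ℝ => f (b + s • (w - b))) = f ∘ (AffineMap.lineMap b w : ℝ →ᵃ[ℝ] E n) := by
      ext s
      simp [AffineMap.lineMap_apply, add_comm]
    rw [e]
    exact this
  have := hc.le_slope_of_hasDerivAt (Set.mem_univ 0) (Set.mem_univ 1) (by norm_num) hd
  simp only [slope_def_field, zero_smul, one_smul, add_zero, sub_zero, div_one,
    add_sub_cancel] at this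
  linarith [this]

lemma descent {n : ℕ} {f : E n → ℝ} (hfd : ContDiff ℝ 1 f) {L : ℝ}
    (hl : ∀ a b, ‖gradient f a - gradient f b‖ ≤ L * ‖a - b‖) (b w : E n) :
    f w ≤ f b + ⟪gradient f b, w - b⟫ + L / 2 * ‖w - b‖ ^ 2 := by
  set v := w - b with hv
  have hd : ∀ s : ℝ, HasDerivAt (fun s : ℝ => f (b + s • v) - s * ⟪gradient f b, v⟫ - L / 2 * ‖v‖ ^ 2 * s ^ 2)
      (⟪gradient f (b + s • v), v⟫ - ⟪gradient f b, v⟫ - L / 2 * ‖v‖ ^ 2 * (2 * s)) s := by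
    intro s
    have h1 := line_deriv hfd b v s
    have h2 := (hasDerivAt_id s).mul_const ⟪gradient f b, v⟫
    have h3 := (hasDerivAt_pow 2 s).const_mul (L / 2 * ‖v‖ ^ 2)
    have h4 := (h1.sub h2).sub h3
    have e : ⟪gradient f (b + s • v), v⟫ - ⟪gradient f b, v⟫ - L / 2 * ‖v‖ ^ 2 * (2 * s) =
      ⟪gradient f (b + s • v), v⟫ - 1 * ⟪gradient f b, v⟫ -
        L / 2 * ‖v‖ ^ 2 * (((2 : ℕ) : ℝ) * s ^ (2 - 1)) := by norm_num
    rw [e]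
    exact h4
  have ha := antitoneOn_of_deriv_nonpos (convex_Icc (0 : ℝ) 1)
    (fun s _ => (hd s).continuousAt.continuousWithinAt)
    (fun s _ => (hd s).differentiableAt.differentiableWithinAt) (by
      intro s hs
      rw [interior_Icc] at hs
      rw [(hd s).deriv, ← inner_sub_left]
      have h1 := real_inner_le_norm (gradient f (b + s • v) - gradient f b) v
      have h2 := hl (b + s • v) b
      rw [add_sub_cancel_left, norm_smul, Real.norm_eq_abs, abs_of_pos hs.1] at h2
      nlinarith [mul_le_mul_of_nonneg_right h2 (norm_nonneg v)])
  have := ha (Set.left_mem_Icc.2 zero_le_one) (Set.right_mem_Icc.2 zero_le_one) zero_le_one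
  simp only [zero_smul, one_smul, add_zero, zero_mul, sub_zero, one_mul, mul_one, one_pow, ne_eq, OfNat.ofNat_ne_zero,
    not_false_eq_true, zero_pow, mul_zero] at this
  have e : b + v = w := by rw [hv]; abel
  rw [e] at this
  linarith

lemma conv_norm {n : ℕ} (p q : E n) (s : ℝ) :
    ‖p + s • (q - p)‖ ^ 2 = (1 - s) * ‖p‖ ^ 2 + s * ‖q‖ ^ 2 - s * (1 - s) * ‖q - p‖ ^ 2 := by
  rw [norm_add_sq_real, norm_smul, norm_sub_sq_real, inner_smul_right, inner_sub_right,
    mul_pow, norm_sub_sq_real, Real.norm_eq_abs, sq_abs, real_inner_self_eq_norm_sq,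
    real_inner_comm q p]
  ring

lemma combo_norm {n : ℕ} (X Y Z w : E n) (t : ℝ) :
    t * ((t - 1) * (‖X - Y‖ ^ 2 - ‖X - Z‖ ^ 2) + (‖w - Y‖ ^ 2 - ‖w - Z‖ ^ 2)) =
    ‖t • Y - (t - 1) • X - w‖ ^ 2 - ‖t • Z - (t - 1) • X - w‖ ^ 2 := by
  simp only [norm_sub_sq_real, norm_smul, inner_sub_left, inner_smul_left, inner_smul_right,
    mul_pow, Real.norm_eq_abs, sq_abs, real_inner_comm Y, real_inner_comm X w,
    real_inner_comm X Z, real_inner_comm Z w]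
  simp [real_inner_comm]
  ring

/-- prox inequality -/
lemma strong {n m : ℕ} (hm : 1 ≤ m) (h : Fin m → E n → ℝ)
    (hc : ∀ i, ConvexOn ℝ Set.univ (h i)) (ℓ : ℝ) (y z : E n)
    (hz : ∀ w, (⨆ i, h i z) + ℓ / 2 * ‖z - y‖ ^ 2 ≤ (⨆ i, h i w) + ℓ / 2 * ‖w - y‖ ^ 2) (w : E n) :
    (⨆ i, h i z) + ℓ / 2 * ‖z - y‖ ^ 2 + ℓ / 2 * ‖w - z‖ ^ 2 ≤
      (⨆ i, h i w) + ℓ / 2 * ‖w - y‖ ^ 2 := by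
  have : Nonempty (Fin m) := ⟨⟨0, hm⟩⟩
  have key : ∀ s : ℝ, 0 < s → s < 1 → (⨆ i, h i z) + ℓ / 2 * ‖z - y‖ ^ 2 +
      (1 - s) * (ℓ / 2 * ‖w - z‖ ^ 2) ≤ (⨆ i, h i w) + ℓ / 2 * ‖w - y‖ ^ 2 := by
    intro s hs hs1
    have h1 := hz (z + s • (w - z))
    have h2 : (⨆ i, h i (z + s • (w - z))) ≤ (1 - s) * (⨆ i, h i z) + s * (⨆ i, h i w) := by
      apply ciSup_le
      intro i
      have e : z + s • (w - z) = (1 - s) • z + s • w := by module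
      rw [e]
      have a := (hc i).2 (Set.mem_univ z) (Set.mem_univ w) (by linarith : 0 ≤ 1 - s) hs.le (by ring)
      have b1 := le_ciSup (f := fun i => h i z) (Set.finite_range _).bddAbove i
      have b2 := le_ciSup (f := fun i => h i w) (Set.finite_range _).bddAbove i
      simp only [smul_eq_mul] at a b1 b2
      have := mul_le_mul_of_nonneg_left b1 (by linarith : 0 ≤ 1 - s)
      have := mul_le_mul_of_nonneg_left b2 hs.le
      linarith
    have e : z + s • (w - z) - y = (z - y) + s • ((w - y) - (z - y)) := by module
    rw [e, conv_norm, sub_sub_sub_cancel_right] at h1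
    have : 0 ≤ s * ((⨆ i, h i w) + ℓ / 2 * ‖w - y‖ ^ 2 - ((⨆ i, h i z) + ℓ / 2 * ‖z - y‖ ^ 2 +
      (1 - s) * (ℓ / 2 * ‖w - z‖ ^ 2))) := by nlinarith
    linarith [nonneg_of_mul_nonneg_right this hs]
  have ht : Filter.Tendsto (fun s : ℝ => (⨆ i, h i z) + ℓ / 2 * ‖z - y‖ ^ 2 +
      (1 - s) * (ℓ / 2 * ‖w - z‖ ^ 2)) (nhdsWithin 0 (Set.Ioi 0))
      (nhds ((⨆ i, h i z) + ℓ / 2 * ‖z - y‖ ^ 2 + (1 - 0) * (ℓ / 2 * ‖w - z‖ ^ 2))) := by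
    apply Filter.Tendsto.mono_left _ nhdsWithin_le_nhds
    apply Continuous.tendsto (f := fun s : ℝ => (⨆ i, h i z) + ℓ / 2 * ‖z - y‖ ^ 2 +
      (1 - s) * (ℓ / 2 * ‖w - z‖ ^ 2))
    fun_prop
  have := le_of_tendsto ht (by
    filter_upwards [Ioo_mem_nhdsGT (zero_lt_one' ℝ)] with s hs
    exact key s hs.1 hs.2)
  linarith

theorem stmt_15
    (n m : ℕ) (hn : 1 ≤ n) (hm : 1 ≤ m)
    (f g F : Fin m → E n → ℝ)
    (L : Fin m → ℝ) (hL : ∀ i, 0 < L i)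
    (hfc : ∀ i, ConvexOn ℝ Set.univ (f i))
    (hfd : ∀ i, ContDiff ℝ 1 (f i))
    (hflip : ∀ i a b, ‖gradient (f i) a - gradient (f i) b‖ ≤ L i * ‖a - b‖)
    (hgc : ∀ i, ConvexOn ℝ Set.univ (g i))
    (hF : ∀ i w, F i w = f i w + g i w)
    (ℓ : ℝ) (hℓ : 0 < ℓ) (hℓL : ∀ i, L i ≤ ℓ)
    (d : E n → E n → E n)
    (hd : ∀ a b w,
      (⨆ i, (⟪gradient (f i) b, d a b - b⟫ + g i (d a b) + f i b - F i a)) +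
          ℓ / 2 * ‖d a b - b‖ ^ 2 ≤
        (⨆ i, (⟪gradient (f i) b, w - b⟫ + g i w + f i b - F i a)) +
          ℓ / 2 * ‖w - b‖ ^ 2)
    (x y z : ℕ → E n) (t : ℕ → ℝ)
    (hy1 : y 1 = x 0) (ht1 : t 1 = 1)
    (ht : ∀ k, 1 ≤ k → t (k + 1) = (1 + Real.sqrt (1 + 4 * t k ^ 2)) / 2)
    (hz : ∀ k, 1 ≤ k → z k = d (x (k - 1)) (y k))
    (hxpos : ∀ k, 1 ≤ k → 0 ≤ (⨆ i, (F i (x (k - 1)) - F i (z k))) → x k = z k)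
    (hxneg : ∀ k, 1 ≤ k → ¬ 0 ≤ (⨆ i, (F i (x (k - 1)) - F i (z k))) → x k = x (k - 1))
    (hy : ∀ k, 1 ≤ k →
      y (k + 1) = x k + (t k / t (k + 1)) • (z k - x k) +
        ((t k - 1) / t (k + 1)) • (x k - x (k - 1))) :
    ∀ (w : E n) (k : ℕ), 1 ≤ k →
      (⨅ i, (F i (x k) - F i w)) ≤ 2 * ℓ * ‖x 0 - w‖ ^ 2 / ((k : ℝ) + 1) ^ 2 := by
  have : Nonempty (Fin m) := ⟨⟨0, hm⟩⟩
  have bA : ∀ u : Fin m → ℝ, ∀ i, u i ≤ ⨆ i, u i := fun u i =>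
    le_ciSup (Set.finite_range _).bddAbove i
  have bB : ∀ u : Fin m → ℝ, ∀ i, (⨅ i, u i) ≤ u i := fun u i =>
    ciInf_le (Set.finite_range _).bddBelow i
  -- basic inequality
  have basic : ∀ k, 1 ≤ k → ∀ w, (⨆ i, (F i (z k) - F i (x (k - 1)))) + ℓ / 2 * ‖w - z k‖ ^ 2 ≤
      (⨆ i, (F i w - F i (x (k - 1)))) + ℓ / 2 * ‖w - y k‖ ^ 2 := by
    intro k hk w
    have hs := strong hm
      (fun i w => ⟪gradient (f i) (y k), w - y k⟫ + g i w + f i (y k) - F i (x (k - 1)))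
      (by
        intro i
        refine ⟨convex_univ, ?_⟩
        intro p _ q _ a b ha hb hab
        have hg := (hgc i).2 (Set.mem_univ p) (Set.mem_univ q) ha hb hab
        obtain rfl : a = 1 - b := by linarith
        simp only [smul_eq_mul, inner_sub_right, inner_add_right, inner_smul_right] at hg ⊢
        linarith)
      ℓ (y k) (z k) (by rw [hz k hk]; exact hd _ _) w
    have h1 : (⨆ i, (F i (z k) - F i (x (k - 1)))) ≤
        (⨆ i, (⟪gradient (f i) (y k), z k - y k⟫ + g i (z k) + f i (y k) - F i (x (k - 1)))) +
          ℓ / 2 * ‖z k - y k‖ ^ 2 := by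
      apply ciSup_le
      intro i
      have a := bA (fun i => ⟪gradient (f i) (y k), z k - y k⟫ + g i (z k) + f i (y k) - F i (x (k - 1))) i
      have b := descent (hfd i) (hflip i) (y k) (z k)
      have c := mul_le_mul_of_nonneg_right (hℓL i) (sq_nonneg ‖z k - y k‖)
      have e := hF i (z k)
      linarith
    have h2 : (⨆ i, (⟪gradient (f i) (y k), w - y k⟫ + g i w + f i (y k) - F i (x (k - 1)))) ≤
        (⨆ i, (F i w - F i (x (k - 1)))) := by
      apply ciSup_le
      intro i
      have a := bA (fun i => F i w - F i (x (k - 1))) i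
      have b := grad_ineq (hfd i) (hfc i) (y k) w
      have e := hF i w
      linarith
    linarith
  intro w
  -- t facts
  have htk : ∀ k : ℕ, 1 ≤ k → ((k : ℝ) + 1) / 2 ≤ t k := by
    intro k hk
    induction k, hk using Nat.le_induction with
    | base => rw [ht1]; norm_num
    | succ k hk ih =>
      rw [ht k hk]
      have hk0 : (0 : ℝ) ≤ k := Nat.cast_nonneg k
      have : 2 * t k ≤ Real.sqrt (1 + 4 * t k ^ 2) := Real.le_sqrt_of_sq_le (by nlinarith)
      push_cast
      linarith
  have ht2 : ∀ k, 1 ≤ k → t (k + 1) * (t (k + 1) - 1) = t k ^ 2 := by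
    intro k hk
    rw [ht k hk]
    have := Real.sq_sqrt (by positivity : 0 ≤ 1 + 4 * t k ^ 2)
    nlinarith
  have ht1' : ∀ k, 1 ≤ k → 1 ≤ t k := by
    intro k hk
    have := htk k hk
    have : (1 : ℝ) ≤ k := by exact_mod_cast hk
    linarith
  -- sigma
  have hMs : ∀ k, 1 ≤ k → (⨅ i, (F i (x k) - F i w)) ≤ (⨅ i, (F i (x (k - 1)) - F i w)) +
      ⨆ i, (F i (z k) - F i (x (k - 1))) := by
    intro k hk
    rw [← sub_le_iff_le_add]
    apply le_ciInf
    intro i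
    have a := bB (fun i => F i (x k) - F i w) i
    have b := bA (fun i => F i (z k) - F i (x (k - 1))) i
    by_cases hc : 0 ≤ (⨆ i, (F i (x (k - 1)) - F i (z k)))
    · have e := hxpos k hk hc
      rw [e] at a ⊢
      linarith
    · have e := hxneg k hk hc
      have c := bA (fun i => F i (x (k - 1)) - F i (z k)) i
      rw [e] at a ⊢
      linarith
  have hneg : ∀ v, (⨆ i, (F i w - F i v)) ≤ - (⨅ i, (F i v - F i w)) := by
    intro v
    apply ciSup_le
    intro i
    have a := bB (fun i => F i v - F i w) i
    linarith
  have s1 : ∀ k, 1 ≤ k → (⨅ i, (F i (x k) - F i w)) ≤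
      ℓ / 2 * (‖w - y k‖ ^ 2 - ‖w - z k‖ ^ 2) := by
    intro k hk
    linarith [hMs k hk, hneg (x (k - 1)), basic k hk w]
  have s2 : ∀ k, 1 ≤ k → (⨅ i, (F i (x k) - F i w)) - (⨅ i, (F i (x (k - 1)) - F i w)) ≤
      ℓ / 2 * (‖x (k - 1) - y k‖ ^ 2 - ‖x (k - 1) - z k‖ ^ 2) := by
    intro k hk
    have := basic k hk (x (k - 1))
    simp only [sub_self, ciSup_const] at this
    linarith [hMs k hk]
  have step : ∀ k, 1 ≤ k → t k ^ 2 * (⨅ i, (F i (x k) - F i w)) -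
      t k * (t k - 1) * (⨅ i, (F i (x (k - 1)) - F i w)) ≤
      ℓ / 2 * (‖t k • y k - (t k - 1) • x (k - 1) - w‖ ^ 2 -
        ‖t k • z k - (t k - 1) • x (k - 1) - w‖ ^ 2) := by
    intro k hk
    rw [← combo_norm]
    have h1 := ht1' k hk
    have a := mul_le_mul_of_nonneg_left (s1 k hk) (by linarith : 0 ≤ t k)
    have b := mul_le_mul_of_nonneg_left (s2 k hk)
      (mul_nonneg (by linarith) (by linarith) : 0 ≤ t k * (t k - 1))
    linarith
  have tel : ∀ k, 1 ≤ k → t k ^ 2 * (⨅ i, (F i (x k) - F i w)) +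
      ℓ / 2 * ‖t k • z k - (t k - 1) • x (k - 1) - w‖ ^ 2 ≤ ℓ / 2 * ‖x 0 - w‖ ^ 2 := by
    intro k hk
    induction k, hk using Nat.le_induction with
    | base =>
      have := step 1 le_rfl
      simp only [ht1, hy1, sub_self, zero_smul, one_smul, sub_zero, mul_zero, zero_mul] at this ⊢
      linarith
    | succ k hk ih =>
      have h := step (k + 1) (by omega)
      rw [ht2 k hk, Nat.add_sub_cancel] at h
      have hp : t (k + 1) ≠ 0 := by linarith [ht1' (k + 1) (by omega)]
      have e : t (k + 1) • y (k + 1) - (t (k + 1) - 1) • x k = t k • z k - (t k - 1) • x (k - 1) := by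
        rw [hy k hk, smul_add, smul_add, smul_smul, smul_smul, mul_div_cancel₀ _ hp,
          mul_div_cancel₀ _ hp]
        module
      rw [e] at h
      rw [Nat.add_sub_cancel]
      linarith
  intro k hk
  have h1 := tel k hk
  have h2 : t k ^ 2 * (⨅ i, (F i (x k) - F i w)) ≤ ℓ / 2 * ‖x 0 - w‖ ^ 2 := by
    have : 0 ≤ ℓ / 2 * ‖t k • z k - (t k - 1) • x (k - 1) - w‖ ^ 2 := by positivity
    linarith
  rw [le_div_iff₀ (by positivity)]
  by_cases h0 : 0 ≤ (⨅ i, (F i (x k) - F i w))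
  · have h3 : ((k : ℝ) + 1) ^ 2 ≤ 4 * t k ^ 2 := by
      have := htk k hk
      have : (0 : ℝ) ≤ k := Nat.cast_nonneg k
      nlinarith
    have := mul_le_mul_of_nonneg_left h3 h0
    linarith
  · have : (⨅ i, (F i (x k) - F i w)) * ((k : ℝ) + 1) ^ 2 ≤ 0 :=
      mul_nonpos_of_nonpos_of_nonneg (by linarith) (by positivity)
    have : 0 ≤ 2 * ℓ * ‖x 0 - w‖ ^ 2 := by positivity
    linarith
end
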